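/- arXiv:1607.00342 — 4 statements merged into one kernel-verified Lean document; each statement's English description precedes it below -/
import Mathlib

section
/- The symmetric invariance condition ℒ_{ρ_a} g = ω^b_a ∨ ι_{ρ_b} g + φ^b_a ∨ θ_b holds: for all indices a, i, j ∈ {1,…,n} and at every point of U, Σ_k ( ρ^k_a ∂_k g_{ij} + g_{kj} ∂_i ρ^k_a + g_{ik} ∂_j ρ^k_a ) = Σ_b ( ω^b_{ai} Σ_k ρ^k_b g_{kj} + ω^b_{aj} Σ_k ρ^k_b g_{ki} + φ^b_{ai} θ_{bj} + φ^b_{aj} θ_{bi} ). -/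
/-- Partial derivative of a real-valued function on `ℝ^n` in the `i`-th coordinate
direction. -/
noncomputable def pd {n : ℕ} (f : (Fin n → ℝ) → ℝ) (i : Fin n) (x : Fin n → ℝ) : ℝ :=
  fderiv ℝ f x (Pi.single i 1)

/-!
Write `∇ρ_a` for the matrix of `∇_i ρ^k_a`. The Lie derivative of the metric is the symmetrised
covariant derivative, `(ℒ_ρ g)_{ij} = ∇_i ρ_j + ∇_j ρ_i`, so it suffices to prove the
unsymmetrised identity `ω^b_{ai} ρ_{bj} + φ^b_{ai} θ_{bj} = ∇_i ρ_{aj}`. Lowering the upper index of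
`N = θ* - ρ` gives `N_{jb} = θ_{bj} - ρ_{bj}`, so the left-hand side is
`(Γ̂ + T)^b_{ai} ρ_{bj} + N_{jb} φ^b_{ai}`, and `φ` is defined as the solution of
`N φ_a = ∇ρ_a - ρ (Γ̂ + T)_a`.
-/

open Matrix

section PointwiseAlgebra

variable {ι κ R : Type*} [Fintype ι]

/-- The components `∇_i X^k = ∂_i X^k + Γ^k_{il} X^l` of the covariant derivative of a vector field
at a point, with row index `k` and column index `i`. Here `dX k i` stands for `∂_i X^k` and
`Γ l k i` for `Γ^k_{il}`. -/
def covDerivMatrix [CommRing R] (Γ : ι → Matrix ι ι R) (X : ι → R) (dX : Matrix ι ι R) :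
    Matrix ι ι R :=
  dX + ∑ l, X l • Γ l

/-- The components `(ℒ_X g)_{ij}` of the Lie derivative of a bilinear form at a point. Here
`dg k i j` stands for `∂_k g_{ij}` and `dX k i` for `∂_i X^k`. -/
def lieDerivMatrix [CommRing R] (g : Matrix ι ι R) (dg : ι → Matrix ι ι R) (X : ι → R)
    (dX : Matrix ι ι R) : Matrix ι ι R :=
  ∑ k, X k • dg k + dXᵀ * g + g * dX

/-- The Christoffel symbols of a metric at a point, computed from the inverse metric and the
derivatives `dg k i j` of the metric, which stand for `∂_k g_{ij}`. The entry
`christoffelMatrix ginv dg l k i` is `Γ^k_{il}`. -/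
def christoffelMatrix [Field R] (ginv : Matrix ι ι R) (dg : ι → Matrix ι ι R) (l : ι) :
    Matrix ι ι R :=
  (1 / 2 : R) • (ginv * of fun m i => dg i m l + dg l m i - dg m i l)

/-- The components `ω^b_i ρ_{bj} + φ^b_i θ_{bj}` of `ω^b ⊗ ι_{ρ_b} g + φ^b ⊗ θ_b` at a point, whose
symmetrisation is `ω^b ∨ ι_{ρ_b} g + φ^b ∨ θ_b`. The lower index `a` of `ω^b_a` and `φ^b_a` is fixed
and suppressed. -/
def invarianceMatrix [Fintype κ] [CommRing R] (g : Matrix ι ι R) (ρ : Matrix ι κ R)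
    (ω φ θ : Matrix κ ι R) : Matrix ι ι R :=
  ωᵀ * (ρᵀ * g) + φᵀ * θ

lemma covDerivMatrix_apply [CommRing R] (Γ : ι → Matrix ι ι R) (X : ι → R) (dX : Matrix ι ι R)
    (k i : ι) : covDerivMatrix Γ X dX k i = dX k i + ∑ l, Γ l k i * X l := by
  simp [covDerivMatrix, Matrix.sum_apply, mul_comm]

lemma christoffelMatrix_apply [Field R] (ginv : Matrix ι ι R) (dg : ι → Matrix ι ι R)
    (l k i : ι) :
    christoffelMatrix ginv dg l k i =
      (1 / 2) * ∑ m, ginv k m * (dg i m l + dg l m i - dg m i l) := by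
  simp [christoffelMatrix, Matrix.mul_apply]

lemma lieDerivMatrix_apply [CommRing R] (g : Matrix ι ι R) (dg : ι → Matrix ι ι R) (X : ι → R)
    (dX : Matrix ι ι R) (i j : ι) :
    lieDerivMatrix g dg X dX i j =
      ∑ k, (X k * dg k i j + g k j * dX k i + g i k * dX k j) := by
  simp [lieDerivMatrix, Matrix.sum_apply, Matrix.mul_apply, Finset.sum_add_distrib, mul_comm]

lemma invarianceMatrix_apply [Fintype κ] [CommRing R] (g : Matrix ι ι R) (ρ : Matrix ι κ R)
    (ω φ θ : Matrix κ ι R) (i j : ι) :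
    invarianceMatrix g ρ ω φ θ i j =
      ∑ b, (ω b i * (∑ k, ρ k b * g k j) + φ b i * θ b j) := by
  simp [invarianceMatrix, Matrix.mul_apply, Finset.sum_add_distrib]

-- Lowering the upper index leaves `½ ∂_l g` plus a skew-symmetric matrix.
lemma mul_christoffelMatrix_add_transpose [Field R] [NeZero (2 : R)] [DecidableEq ι]
    {g ginv : Matrix ι ι R} {dg : ι → Matrix ι ι R} (hginv : g * ginv = 1)
    (hdg : ∀ l, (dg l).IsSymm) (l : ι) :
    g * christoffelMatrix ginv dg l + (g * christoffelMatrix ginv dg l)ᵀ = dg l := by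
  have lower : g * christoffelMatrix ginv dg l =
      (1 / 2 : R) • of fun m i => dg i m l + dg l m i - dg m i l := by
    rw [christoffelMatrix, Matrix.mul_smul, ← Matrix.mul_assoc, hginv, Matrix.one_mul]
  ext i j
  simp only [lower, Matrix.add_apply, transpose_apply, Matrix.smul_apply, of_apply,
    smul_eq_mul, (hdg l).apply i j]
  field_simp
  ring

lemma lieDerivMatrix_eq_covDerivMatrix_symmetrized [CommRing R] {g : Matrix ι ι R}
    {dg Γ : ι → Matrix ι ι R} (hg : g.IsSymm) (hΓ : ∀ l, g * Γ l + (g * Γ l)ᵀ = dg l)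
    (X : ι → R) (dX : Matrix ι ι R) :
    lieDerivMatrix g dg X dX =
      (covDerivMatrix Γ X dX)ᵀ * g + ((covDerivMatrix Γ X dX)ᵀ * g)ᵀ := by
  simp only [lieDerivMatrix, covDerivMatrix, ← hΓ, transpose_mul, transpose_add, transpose_sum,
    transpose_smul, transpose_transpose, hg.eq, Matrix.add_mul, Matrix.sum_mul, Matrix.smul_mul,
    smul_add, Finset.sum_add_distrib]
  abel

variable [Fintype κ] [CommRing R] [DecidableEq ι]

-- `A` plays the role of `(Γ̂ + T)^b_{ai}` for fixed `a`, so that `A - φ` is `ω`.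
lemma invarianceMatrix_eq_transpose_mul {g ginv D : Matrix ι ι R} {ρ N : Matrix ι κ R}
    {A φ θ Ninv : Matrix κ ι R} (hg : g.IsSymm) (hginv : g * ginv = 1)
    (hN : N = ginv * θᵀ - ρ) (hNinv : N * Ninv = 1) (hφ : φ = Ninv * (D - ρ * A)) :
    invarianceMatrix g ρ (A - φ) φ θ = Dᵀ * g := by
  have lower_N : Nᵀ * g = θ - ρᵀ * g := by
    have hgN : g * N = θᵀ - g * ρ := by
      rw [hN, Matrix.mul_sub, ← Matrix.mul_assoc, hginv, Matrix.one_mul]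
    simpa [hg.eq] using congrArg transpose hgN
  have hNφ : N * φ = D - ρ * A := by
    rw [hφ, ← Matrix.mul_assoc, hNinv, Matrix.one_mul]
  calc invarianceMatrix g ρ (A - φ) φ θ
      = Aᵀ * (ρᵀ * g) + φᵀ * (Nᵀ * g) := by
        rw [invarianceMatrix, lower_N, transpose_sub, Matrix.sub_mul, Matrix.mul_sub]
        abel
    _ = (ρ * A + N * φ)ᵀ * g := by
        simp only [transpose_add, transpose_mul, Matrix.add_mul, Matrix.mul_assoc]
    _ = Dᵀ * g := by rw [hNφ, add_sub_cancel]

lemma lieDerivMatrix_eq_invarianceMatrix_symmetrized {g ginv dX : Matrix ι ι R}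
    {dg Γ : ι → Matrix ι ι R} {X : ι → R} {ρ N : Matrix ι κ R} {A φ θ Ninv : Matrix κ ι R}
    (hg : g.IsSymm) (hginv : g * ginv = 1) (hΓ : ∀ l, g * Γ l + (g * Γ l)ᵀ = dg l)
    (hN : N = ginv * θᵀ - ρ) (hNinv : N * Ninv = 1)
    (hφ : φ = Ninv * (covDerivMatrix Γ X dX - ρ * A)) :
    lieDerivMatrix g dg X dX =
      invarianceMatrix g ρ (A - φ) φ θ + (invarianceMatrix g ρ (A - φ) φ θ)ᵀ := by
  rw [invarianceMatrix_eq_transpose_mul hg hginv hN hNinv hφ,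
    lieDerivMatrix_eq_covDerivMatrix_symmetrized hg hΓ]

end PointwiseAlgebra

lemma pd_eq_of_eqOn {n : ℕ} {U : Set (Fin n → ℝ)} (hU : IsOpen U) {f h : (Fin n → ℝ) → ℝ}
    (hfh : Set.EqOn f h U) {x : Fin n → ℝ} (hx : x ∈ U) (i : Fin n) : pd f i x = pd h i x := by
  rw [pd, pd, (hfh.eventuallyEq_of_mem (hU.mem_nhds hx)).fderiv_eq]

theorem symmetric_invariance_condition_general {n : ℕ} {κ : Type*} [Fintype κ]
    {U : Set (Fin n → ℝ)} (hU : IsOpen U)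
    {g ginv : (Fin n → ℝ) → Fin n → Fin n → ℝ}
    (_hg_diff : ∀ i j, DifferentiableOn ℝ (fun x => g x i j) U)
    (hg_symm : ∀ x ∈ U, ∀ i j, g x i j = g x j i)
    (hginv : ∀ x ∈ U, ∀ i j, (∑ k, g x i k * ginv x k j) = if i = j then (1 : ℝ) else 0)
    {Γ : (Fin n → ℝ) → Fin n → Fin n → Fin n → ℝ}
    (hΓ : ∀ x ∈ U, ∀ i j k, Γ x i j k =
      (1 / 2) * ∑ l, ginv x i l *
        (pd (fun y => g y l k) j x + pd (fun y => g y l j) k x - pd (fun y => g y j k) l x))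
    {ρ : (Fin n → ℝ) → Fin n → κ → ℝ} {θ : (Fin n → ℝ) → κ → Fin n → ℝ}
    (_hρ_diff : ∀ i a, DifferentiableOn ℝ (fun x => ρ x i a) U)
    {N : (Fin n → ℝ) → Fin n → κ → ℝ} {Ninv : (Fin n → ℝ) → κ → Fin n → ℝ}
    (hN : ∀ x ∈ U, ∀ k b, N x k b = (∑ l, ginv x k l * θ x b l) - ρ x k b)
    (hNinv : ∀ x ∈ U, ∀ i j, (∑ b, N x i b * Ninv x b j) = if i = j then (1 : ℝ) else 0)
    {Γhat T φ ω : (Fin n → ℝ) → κ → κ → Fin n → ℝ}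
    (hφ : ∀ x ∈ U, ∀ a b i, φ x a b i = ∑ k, Ninv x a k *
      (pd (fun y => ρ y k b) i x + (∑ l, Γ x k i l * ρ x l b)
        - (∑ c, Γhat x c b i * ρ x k c) - ∑ c, ρ x k c * T x c b i))
    (hω : ∀ x ∈ U, ∀ a b i, ω x a b i = Γhat x a b i - φ x a b i + T x a b i) :
    ∀ x ∈ U, ∀ a i j,
      (∑ k, (ρ x k a * pd (fun y => g y i j) k x
            + g x k j * pd (fun y => ρ y k a) i x
            + g x i k * pd (fun y => ρ y k a) j x))
        = ∑ b, (ω x b a i * (∑ k, ρ x k b * g x k j)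
            + ω x b a j * (∑ k, ρ x k b * g x k i)
            + φ x b a i * θ x b j + φ x b a j * θ x b i) := by
  intro x hx a i j
  let dg (l : Fin n) : Matrix (Fin n) (Fin n) ℝ := of fun i j => pd (fun y => g y i j) l x
  let dρ : Matrix (Fin n) (Fin n) ℝ := of fun k i => pd (fun y => ρ y k a) i x
  let A : Matrix κ (Fin n) ℝ := of fun b i => Γhat x b a i + T x b a i
  let Φ : Matrix κ (Fin n) ℝ := of fun b i => φ x b a i
  have hg : (of (g x)).IsSymm := .ext fun i j => hg_symm x hx j i
  have hdg (l : Fin n) : (dg l).IsSymm :=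
    .ext fun i j => pd_eq_of_eqOn hU (fun y hy => hg_symm y hy j i) hx l
  have hgginv : of (g x) * of (ginv x) = 1 := by
    ext i j
    exact (hginv x hx i j).trans Matrix.one_apply.symm
  have hNNinv : of (N x) * of (Ninv x) = 1 := by
    ext i j
    exact (hNinv x hx i j).trans Matrix.one_apply.symm
  have hN_eq : of (N x) = of (ginv x) * (of (θ x))ᵀ - of (ρ x) := by
    ext k b
    exact hN x hx k b
  have hΦ : Φ = of (Ninv x) *
      (covDerivMatrix (christoffelMatrix (of (ginv x)) dg) (fun l => ρ x l a) dρ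
        - of (ρ x) * A) := by
    ext b i
    simp [Φ, A, dg, dρ, hφ x hx, hΓ x hx, covDerivMatrix_apply, christoffelMatrix_apply,
      Matrix.mul_apply, mul_add, Finset.sum_add_distrib, sub_sub, mul_comm (ρ x _ _) (Γhat x _ _ _)]
  have hω_eq (b : κ) (i : Fin n) : ω x b a i = (A - Φ) b i :=
    (hω x hx b a i).trans (sub_add_eq_add_sub ..)
  have lieDeriv_entry := congrFun₂ (lieDerivMatrix_eq_invarianceMatrix_symmetrized hg hgginv
    (mul_christoffelMatrix_add_transpose hgginv hdg) hN_eq hNNinv hΦ) i j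
  rw [lieDerivMatrix_apply, Matrix.add_apply, transpose_apply, invarianceMatrix_apply,
    invarianceMatrix_apply, ← Finset.sum_add_distrib] at lieDeriv_entry
  refine lieDeriv_entry.trans (Finset.sum_congr rfl fun b _ => ?_)
  rw [hω_eq, hω_eq]
  simp only [of_apply, Φ]
  ring

/-- **Symmetric invariance condition** `ℒ_{ρ_a} g = ω^b_a ∨ ι_{ρ_b} g + φ^b_a ∨ θ_b`.
On an open set `U ⊆ ℝⁿ` with a Riemannian metric `g` (inverse `ginv`, Levi-Civita
Christoffel symbols `Γ`), a closed-3-form-type field `H` (totally antisymmetric), data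
`ρ^i_a`, `θ_{ai}` with `M = θ* + ρ` and `N = θ* − ρ` pointwise invertible, arbitrary
auxiliary connection coefficients `Γ̂`, and `T`, `φ`, `ω` defined by the general
formulas, the symmetric invariance condition holds at every point of `U`. -/
theorem symmetric_invariance_condition {n : ℕ}
    (U : Set (Fin n → ℝ)) (hU : IsOpen U)
    (g ginv : (Fin n → ℝ) → Fin n → Fin n → ℝ)
    (hg_smooth : ∀ i j, ContDiffOn ℝ (⊤ : ℕ∞) (fun x => g x i j) U)
    (hginv_smooth : ∀ i j, ContDiffOn ℝ (⊤ : ℕ∞) (fun x => ginv x i j) U)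
    (hg_symm : ∀ x ∈ U, ∀ i j, g x i j = g x j i)
    (hg_posdef : ∀ x ∈ U, ∀ v : Fin n → ℝ, v ≠ 0 → 0 < ∑ i, ∑ j, v i * g x i j * v j)
    (hginv : ∀ x ∈ U, ∀ i j, (∑ k, g x i k * ginv x k j) = if i = j then (1 : ℝ) else 0)
    (Γ : (Fin n → ℝ) → Fin n → Fin n → Fin n → ℝ)
    (hΓ : ∀ x ∈ U, ∀ i j k, Γ x i j k =
      (1 / 2) * ∑ l, ginv x i l *
        (pd (fun y => g y l k) j x + pd (fun y => g y l j) k x - pd (fun y => g y j k) l x))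
    (H : (Fin n → ℝ) → Fin n → Fin n → Fin n → ℝ)
    (hH_smooth : ∀ i j k, ContDiffOn ℝ (⊤ : ℕ∞) (fun x => H x i j k) U)
    (hH_anti₁ : ∀ x ∈ U, ∀ i j k, H x i j k = - H x j i k)
    (hH_anti₂ : ∀ x ∈ U, ∀ i j k, H x i j k = - H x i k j)
    (ρ θ : (Fin n → ℝ) → Fin n → Fin n → ℝ)
    (hρ_smooth : ∀ i a, ContDiffOn ℝ (⊤ : ℕ∞) (fun x => ρ x i a) U)
    (hθ_smooth : ∀ a i, ContDiffOn ℝ (⊤ : ℕ∞) (fun x => θ x a i) U)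
    (M N : (Fin n → ℝ) → Fin n → Fin n → ℝ)
    (hM : ∀ (x : Fin n → ℝ) (k b : Fin n), M x k b = (∑ l, ginv x k l * θ x b l) + ρ x k b)
    (hN : ∀ (x : Fin n → ℝ) (k b : Fin n), N x k b = (∑ l, ginv x k l * θ x b l) - ρ x k b)
    (Minv Ninv : (Fin n → ℝ) → Fin n → Fin n → ℝ)
    (hMinv₁ : ∀ x ∈ U, ∀ a b, (∑ k, Minv x a k * M x k b) = if a = b then (1 : ℝ) else 0)
    (hMinv₂ : ∀ x ∈ U, ∀ a b, (∑ k, M x a k * Minv x k b) = if a = b then (1 : ℝ) else 0)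
    (hNinv₁ : ∀ x ∈ U, ∀ a b, (∑ k, Ninv x a k * N x k b) = if a = b then (1 : ℝ) else 0)
    (hNinv₂ : ∀ x ∈ U, ∀ a b, (∑ k, N x a k * Ninv x k b) = if a = b then (1 : ℝ) else 0)
    (Γhat : (Fin n → ℝ) → Fin n → Fin n → Fin n → ℝ)
    (hΓhat_smooth : ∀ a b i, ContDiffOn ℝ (⊤ : ℕ∞) (fun x => Γhat x a b i) U)
    (T φ ω : (Fin n → ℝ) → Fin n → Fin n → Fin n → ℝ)
    (hT : ∀ x ∈ U, ∀ a b i, T x a b i = ∑ k, Minv x a k *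
      (pd (fun y => M y k b) i x + (∑ l, Γ x k i l * M x l b)
        - (∑ c, Γhat x c b i * M x k c)
        - (1 / 2) * ∑ l, ∑ m, ρ x l b * ginv x k m * H x m l i))
    (hφ : ∀ x ∈ U, ∀ a b i, φ x a b i = ∑ k, Ninv x a k *
      (pd (fun y => ρ y k b) i x + (∑ l, Γ x k i l * ρ x l b)
        - (∑ c, Γhat x c b i * ρ x k c) - ∑ c, ρ x k c * T x c b i))
    (hω : ∀ x ∈ U, ∀ a b i, ω x a b i = Γhat x a b i - φ x a b i + T x a b i) :
    ∀ x ∈ U, ∀ a i j,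
      (∑ k, (ρ x k a * pd (fun y => g y i j) k x
            + g x k j * pd (fun y => ρ y k a) i x
            + g x i k * pd (fun y => ρ y k a) j x))
        = ∑ b, (ω x b a i * (∑ k, ρ x k b * g x k j)
            + ω x b a j * (∑ k, ρ x k b * g x k i)
            + φ x b a i * θ x b j + φ x b a j * θ x b i) := by
  exact symmetric_invariance_condition_general hU
    (fun i j => (hg_smooth i j).differentiableOn (by simp)) hg_symm hginv hΓ
    (fun i a => (hρ_smooth i a).differentiableOn (by simp)) (fun x _ => hN x) hNinv₂ hφ hω
end

section
/- The antisymmetric invariance condition ι_{ρ_a} H = dθ_a − ω^b_a ∧ θ_b ± φ^b_a ∧ ι_{ρ_b} g holds (for one choice of worldsheet-signature sign): for all indices a, i, j ∈ {1,…,n} and at every point of U, Σ_k ρ^k_a H_{kij} = ∂_i θ_{aj} − ∂_j θ_{ai} − Σ_b ( ω^b_{ai} θ_{bj} − ω^b_{aj} θ_{bi} ) − Σ_{b,k} ( φ^b_{ai} ρ^k_b g_{kj} − φ^b_{aj} ρ^k_b g_{ki} ). -/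
open scoped Topology

section PartialDerivatives

variable {n : ℕ} {x : Fin n → ℝ}

lemma pd_congr {f h : (Fin n → ℝ) → ℝ} (hfh : f =ᶠ[𝓝 x] h) (i : Fin n) :
    pd f i x = pd h i x := by
  rw [pd, pd, hfh.fderiv_eq]

lemma pd_add {f h : (Fin n → ℝ) → ℝ} (hf : DifferentiableAt ℝ f x) (hh : DifferentiableAt ℝ h x)
    (i : Fin n) : pd (fun y => f y + h y) i x = pd f i x + pd h i x := by
  rw [pd, fderiv_fun_add hf hh]
  rfl

lemma pd_sum_mul {κ : Type*} [Fintype κ] {f h : κ → (Fin n → ℝ) → ℝ}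
    (hf : ∀ k, DifferentiableAt ℝ (f k) x) (hh : ∀ k, DifferentiableAt ℝ (h k) x) (i : Fin n) :
    pd (fun y => ∑ k, f k y * h k y) i x
      = ∑ k, f k x * pd (h k) i x + ∑ k, pd (f k) i x * h k x := by
  rw [pd, fderiv_fun_sum fun k _ => (hf k).fun_mul (hh k), ← Finset.sum_add_distrib,
    sum_apply]
  refine Finset.sum_congr rfl fun k _ => ?_
  rw [fderiv_fun_mul (hf k) (hh k)]
  simp [pd, mul_comm]

end PartialDerivatives

section Matrices

variable {m ι R : Type*} [DecidableEq m] [Fintype ι]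

lemma of_mul_of_eq_one [Semiring R] {A : m → ι → R} {B : ι → m → R}
    (h : ∀ k l, ∑ a, A k a * B a l = if k = l then 1 else 0) :
    Matrix.of A * Matrix.of B = 1 := by
  ext k l
  rw [Matrix.mul_apply, Matrix.one_apply]
  exact h k l

variable [Fintype m]

lemma sum_mul_sum_mul_of_mul_eq_one [Semiring R] {A : m → ι → R} {B : ι → m → R}
    (h : ∀ k l, ∑ a, A k a * B a l = if k = l then 1 else 0) (v : m → R) (k : m) :
    ∑ a, A k a * ∑ l, B a l * v l = v k := by
  change (Matrix.of A).mulVec ((Matrix.of B).mulVec v) k = v k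
  rw [Matrix.mulVec_mulVec, of_mul_of_eq_one h, Matrix.one_mulVec]

section Connection

variable [Ring R] {S ρ DS Dρ K : Matrix m ι R} {P Q : Matrix ι m R} {A T φ : Matrix ι ι R}

/-- Read at one point and for one form index `i`: `S = θ*`, `DS = ∇_i θ*`, `Dρ = ∇_i ρ`, `A = Γ̂_i`
and `K = ½ g⁻¹ (ι_ρ H)_i`, so that `A - φ + T` is the connection matrix `ω_i`. -/
lemma mul_connection_add_mul_eq_sub (hP : (S + ρ) * P = 1) (hQ : (S - ρ) * Q = 1)
    (hT : T = P * (DS + Dρ - (S + ρ) * A - K)) (hφ : φ = Q * (Dρ - ρ * A - ρ * T)) :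
    S * (A - φ + T) + ρ * φ = DS - K := by
  have hMT : (S + ρ) * T = DS + Dρ - (S + ρ) * A - K := by
    rw [hT, ← Matrix.mul_assoc, hP, Matrix.one_mul]
  have hNφ : (S - ρ) * φ = Dρ - ρ * A - ρ * T := by
    rw [hφ, ← Matrix.mul_assoc, hQ, Matrix.one_mul]
  calc S * (A - φ + T) + ρ * φ
      = (S + ρ) * A + (S + ρ) * T - (S - ρ) * φ - ρ * A - ρ * T := by
        simp only [Matrix.mul_add, Matrix.mul_sub, Matrix.add_mul, Matrix.sub_mul]
        abel
    _ = DS - K := by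
        rw [hMT, hNφ]
        abel

lemma mul_connection_add_mul_mul_eq_sub {g ginv : Matrix m m R} {Θ L : Matrix m ι R}
    (hg : g * ginv = 1) (hP : (ginv * Θ + ρ) * P = 1) (hQ : (ginv * Θ - ρ) * Q = 1)
    (hT : T = P * (DS + Dρ - (ginv * Θ + ρ) * A - ginv * L))
    (hφ : φ = Q * (Dρ - ρ * A - ρ * T)) :
    Θ * (A - φ + T) + g * (ρ * φ) = g * DS - L := by
  have lower (X : Matrix m ι R) : g * (ginv * X) = X := by
    rw [← Matrix.mul_assoc, hg, Matrix.one_mul]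
  have raised := congrArg (g * ·) (mul_connection_add_mul_eq_sub hP hQ hT hφ)
  simpa only [Matrix.mul_add, Matrix.mul_sub, Matrix.mul_assoc, lower] using raised

end Connection

lemma sum_connection_mul_add_sum_mul_mul_eq_sub [CommRing R] {g ginv H : m → m → R}
    {θ : ι → m → R} {ρ M N DS Dρ DM : m → ι → R} {Minv Ninv : ι → m → R} {A T φ : ι → ι → R}
    {r : R} (hsymm : ∀ i j, g i j = g j i)
    (hinv : ∀ i j, ∑ k, g i k * ginv k j = if i = j then 1 else 0)
    (hM : ∀ k b, M k b = ∑ l, ginv k l * θ b l + ρ k b)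
    (hN : ∀ k b, N k b = ∑ l, ginv k l * θ b l - ρ k b)
    (hMinv : ∀ k l, ∑ a, M k a * Minv a l = if k = l then 1 else 0)
    (hNinv : ∀ k l, ∑ a, N k a * Ninv a l = if k = l then 1 else 0)
    (hDM : ∀ k b, DM k b = DS k b + Dρ k b)
    (hT : ∀ a b, T a b = ∑ k, Minv a k * (DM k b - ∑ c, A c b * M k c
      - r * ∑ l, ∑ m, ρ l b * ginv k m * H m l))
    (hφ : ∀ a b, φ a b = ∑ k, Ninv a k * (Dρ k b - ∑ c, A c b * ρ k c - ∑ c, ρ k c * T c b))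
    (j : m) (a : ι) :
    ∑ b, (A b a - φ b a + T b a) * θ b j + ∑ b, ∑ k, φ b a * ρ k b * g k j
      = ∑ k, g j k * DS k a - r * ∑ l, ρ l a * H j l := by
  let Θ : Matrix m ι R := (Matrix.of θ).transpose
  let L : Matrix m ι R := Matrix.of fun k b => r * ∑ l, ρ l b * H k l
  have hM' : Matrix.of M = Matrix.of ginv * Θ + Matrix.of ρ := Matrix.ext hM
  have hN' : Matrix.of N = Matrix.of ginv * Θ - Matrix.of ρ := Matrix.ext hN
  have hDM' : Matrix.of DM = Matrix.of DS + Matrix.of Dρ := Matrix.ext hDM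
  have hL (k b) : (Matrix.of ginv * L) k b = r * ∑ l, ∑ m, ρ l b * ginv k m * H m l := by
    simp only [L, Matrix.mul_apply, Matrix.of_apply, Finset.mul_sum]
    rw [Finset.sum_comm]
    exact Finset.sum_congr rfl fun _ _ => Finset.sum_congr rfl fun _ _ => by ring
  have hT' : Matrix.of T = Matrix.of Minv * (Matrix.of DM - Matrix.of M * Matrix.of A
      - Matrix.of ginv * L) := by
    ext a b
    simp [Matrix.mul_apply (M := Matrix.of Minv), hL, hT, Matrix.mul_apply (M := Matrix.of M),
      mul_comm (A _ _)]
  have hφ' : Matrix.of φ = Matrix.of Ninv * (Matrix.of Dρ - Matrix.of ρ * Matrix.of A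
      - Matrix.of ρ * Matrix.of T) := by
    ext a b
    simp [Matrix.mul_apply, hφ, mul_comm (A _ _)]
  have lowered := mul_connection_add_mul_mul_eq_sub (of_mul_of_eq_one hinv)
    (hM' ▸ of_mul_of_eq_one hMinv) (hN' ▸ of_mul_of_eq_one hNinv) (hM' ▸ hDM' ▸ hT') hφ'
  calc ∑ b, (A b a - φ b a + T b a) * θ b j + ∑ b, ∑ k, φ b a * ρ k b * g k j
      = (Θ * (Matrix.of A - Matrix.of φ + Matrix.of T)
          + Matrix.of g * (Matrix.of ρ * Matrix.of φ)) j a := by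
        simp only [Θ, Matrix.add_apply, Matrix.sub_apply, Matrix.mul_apply, Matrix.of_apply,
          Matrix.transpose_apply, mul_comm (θ _ _), Finset.mul_sum]
        rw [Finset.sum_comm (s := Finset.univ (α := m))]
        simp only [hsymm j, mul_comm (φ _ _), mul_comm (g _ _)]
    _ = (Matrix.of g * Matrix.of DS - L) j a := by rw [lowered]
    _ = ∑ k, g j k * DS k a - r * ∑ l, ρ l a * H j l := rfl

end Matrices

section LeviCivita

variable {n : ℕ}

/-- The Christoffel symbols of the first kind
`Γ_{j,il} = ½ (∂_i g_{jl} + ∂_l g_{ji} − ∂_j g_{il})`, the lowered index coming first. -/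
noncomputable def christoffelFirstKind (g : (Fin n → ℝ) → Fin n → Fin n → ℝ) (x : Fin n → ℝ)
    (j i l : Fin n) : ℝ :=
  (1 / 2) * (pd (fun y => g y j l) i x + pd (fun y => g y j i) l x - pd (fun y => g y i l) j x)

/-- The component `∇_i vᵏ = ∂_i vᵏ + Γᵏ_{il} vˡ` of the covariant derivative of a vector field. -/
noncomputable def covDeriv (Γ : (Fin n → ℝ) → Fin n → Fin n → Fin n → ℝ)
    (v : (Fin n → ℝ) → Fin n → ℝ) (i : Fin n) (x : Fin n → ℝ) (k : Fin n) : ℝ :=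
  pd (fun y => v y k) i x + ∑ l, Γ x k i l * v x l

/-- The vector field `α♯ᵏ = gᵏˡ α_l` obtained from the covector field `α` by raising its index. -/
def sharp (ginv : (Fin n → ℝ) → Fin n → Fin n → ℝ) (α : (Fin n → ℝ) → Fin n → ℝ)
    (x : Fin n → ℝ) (k : Fin n) : ℝ :=
  ∑ l, ginv x k l * α x l

variable {x : Fin n → ℝ} {g ginv : (Fin n → ℝ) → Fin n → Fin n → ℝ}
  {Γ : (Fin n → ℝ) → Fin n → Fin n → Fin n → ℝ}

lemma pd_metric_comm (hsymm : ∀ᶠ y in 𝓝 x, ∀ i j, g y i j = g y j i) (i j k : Fin n) :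
    pd (fun y => g y i j) k x = pd (fun y => g y j i) k x :=
  pd_congr (hsymm.mono fun _ hy => hy i j) k

lemma christoffelFirstKind_comm (hsymm : ∀ᶠ y in 𝓝 x, ∀ i j, g y i j = g y j i)
    (k i j : Fin n) : christoffelFirstKind g x k i j = christoffelFirstKind g x k j i := by
  rw [christoffelFirstKind, christoffelFirstKind, pd_metric_comm hsymm i j]
  ring

lemma christoffelFirstKind_add_eq_pd (hsymm : ∀ᶠ y in 𝓝 x, ∀ i j, g y i j = g y j i)
    (i j k : Fin n) :
    christoffelFirstKind g x j i k + christoffelFirstKind g x k i j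
      = pd (fun y => g y j k) i x := by
  rw [christoffelFirstKind, christoffelFirstKind, pd_metric_comm hsymm k j,
    pd_metric_comm hsymm i j, pd_metric_comm hsymm i k]
  ring

lemma sum_metric_mul_christoffel
    (hinv : ∀ i j, ∑ k, g x i k * ginv x k j = if i = j then (1 : ℝ) else 0)
    (hΓ : ∀ i j k, Γ x i j k = (1 / 2) * ∑ l, ginv x i l *
      (pd (fun y => g y l k) j x + pd (fun y => g y l j) k x - pd (fun y => g y j k) l x))
    (j i l : Fin n) : ∑ k, g x j k * Γ x k i l = christoffelFirstKind g x j i l := by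
  rw [← sum_mul_sum_mul_of_mul_eq_one hinv (fun m => christoffelFirstKind g x m i l) j]
  simp only [hΓ, christoffelFirstKind, Finset.mul_sum, mul_left_comm]

lemma differentiableAt_sharp {α : (Fin n → ℝ) → Fin n → ℝ}
    (hginv : ∀ i j, DifferentiableAt ℝ (fun y => ginv y i j) x)
    (hα : ∀ i, DifferentiableAt ℝ (fun y => α y i) x) (k : Fin n) :
    DifferentiableAt ℝ (fun y => sharp ginv α y k) x :=
  DifferentiableAt.fun_sum fun l _ => (hginv k l).mul (hα l)

lemma covDeriv_add {u v w : (Fin n → ℝ) → Fin n → ℝ}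
    (hu : ∀ᶠ y in 𝓝 x, ∀ k, u y k = v y k + w y k)
    (hv : ∀ k, DifferentiableAt ℝ (fun y => v y k) x)
    (hw : ∀ k, DifferentiableAt ℝ (fun y => w y k) x) (i k : Fin n) :
    covDeriv Γ u i x k = covDeriv Γ v i x k + covDeriv Γ w i x k := by
  simp only [covDeriv, pd_congr (hu.mono fun _ hy => hy k), pd_add (hv k) (hw k),
    hu.self_of_nhds, mul_add, Finset.sum_add_distrib]
  ring

lemma pd_sum_metric_mul {v : (Fin n → ℝ) → Fin n → ℝ}
    (hg : ∀ i j, DifferentiableAt ℝ (fun y => g y i j) x)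
    (hsymm : ∀ᶠ y in 𝓝 x, ∀ i j, g y i j = g y j i)
    (hΓ : ∀ j i l, ∑ k, g x j k * Γ x k i l = christoffelFirstKind g x j i l)
    (hv : ∀ k, DifferentiableAt ℝ (fun y => v y k) x) (i j : Fin n) :
    pd (fun y => ∑ k, g y j k * v y k) i x
      = ∑ k, g x j k * covDeriv Γ v i x k + ∑ k, christoffelFirstKind g x k i j * v x k := by
  have lowerΓ : ∑ k, g x j k * ∑ l, Γ x k i l * v x l
      = ∑ l, christoffelFirstKind g x j i l * v x l := by
    simp_rw [← hΓ, Finset.mul_sum, Finset.sum_mul, ← mul_assoc]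
    exact Finset.sum_comm
  rw [pd_sum_mul (hg j) hv]
  simp only [covDeriv, mul_add, Finset.sum_add_distrib, lowerΓ,
    ← christoffelFirstKind_add_eq_pd hsymm i j, add_mul, add_assoc]

lemma sum_metric_mul_covDeriv_sharp_sub {α : (Fin n → ℝ) → Fin n → ℝ}
    (hg : ∀ i j, DifferentiableAt ℝ (fun y => g y i j) x)
    (hsymm : ∀ᶠ y in 𝓝 x, ∀ i j, g y i j = g y j i)
    (hginv : ∀ i j, DifferentiableAt ℝ (fun y => ginv y i j) x)
    (hinv : ∀ᶠ y in 𝓝 x, ∀ i j, ∑ k, g y i k * ginv y k j = if i = j then (1 : ℝ) else 0)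
    (hΓ : ∀ j i l, ∑ k, g x j k * Γ x k i l = christoffelFirstKind g x j i l)
    (hα : ∀ i, DifferentiableAt ℝ (fun y => α y i) x) (i j : Fin n) :
    ∑ k, g x j k * covDeriv Γ (sharp ginv α) i x k
        - ∑ k, g x i k * covDeriv Γ (sharp ginv α) j x k
      = pd (fun y => α y j) i x - pd (fun y => α y i) j x := by
  have pd_lower (i j : Fin n) : pd (fun y => α y j) i x
      = ∑ k, g x j k * covDeriv Γ (sharp ginv α) i x k
        + ∑ k, christoffelFirstKind g x k i j * sharp ginv α x k := by
    rw [← pd_sum_metric_mul hg hsymm hΓ (differentiableAt_sharp hginv hα)]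
    exact pd_congr (hinv.mono fun y hy => (sum_mul_sum_mul_of_mul_eq_one hy (α y) j).symm) i
  rw [pd_lower i j, pd_lower j i]
  simp only [christoffelFirstKind_comm hsymm _ i j, add_sub_add_right_eq_sub]

end LeviCivita

theorem antisymmetric_invariance_condition_general {n : ℕ} {ι : Type*} [Fintype ι]
    (U : Set (Fin n → ℝ)) (hU : IsOpen U)
    (g ginv : (Fin n → ℝ) → Fin n → Fin n → ℝ)
    (hg : ∀ i j, DifferentiableOn ℝ (fun x => g x i j) U)
    (hginv : ∀ i j, DifferentiableOn ℝ (fun x => ginv x i j) U)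
    (hsymm : ∀ x ∈ U, ∀ i j, g x i j = g x j i)
    (hinv : ∀ x ∈ U, ∀ i j, (∑ k, g x i k * ginv x k j) = if i = j then (1 : ℝ) else 0)
    (Γ : (Fin n → ℝ) → Fin n → Fin n → Fin n → ℝ)
    (hΓ : ∀ x ∈ U, ∀ i j k, Γ x i j k =
      (1 / 2) * ∑ l, ginv x i l *
        (pd (fun y => g y l k) j x + pd (fun y => g y l j) k x - pd (fun y => g y j k) l x))
    (H : (Fin n → ℝ) → Fin n → Fin n → Fin n → ℝ)
    (hH₁ : ∀ x ∈ U, ∀ i j k, H x i j k = -H x j i k)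
    (hH₂ : ∀ x ∈ U, ∀ i j k, H x i j k = -H x i k j)
    (ρ : (Fin n → ℝ) → Fin n → ι → ℝ) (θ : (Fin n → ℝ) → ι → Fin n → ℝ)
    (hρ : ∀ i a, DifferentiableOn ℝ (fun x => ρ x i a) U)
    (hθ : ∀ a i, DifferentiableOn ℝ (fun x => θ x a i) U)
    (M N : (Fin n → ℝ) → Fin n → ι → ℝ)
    (hM : ∀ x ∈ U, ∀ k b, M x k b = (∑ l, ginv x k l * θ x b l) + ρ x k b)
    (hN : ∀ x ∈ U, ∀ k b, N x k b = (∑ l, ginv x k l * θ x b l) - ρ x k b)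
    (Minv Ninv : (Fin n → ℝ) → ι → Fin n → ℝ)
    (hMinv : ∀ x ∈ U, ∀ k l, (∑ a, M x k a * Minv x a l) = if k = l then (1 : ℝ) else 0)
    (hNinv : ∀ x ∈ U, ∀ k l, (∑ a, N x k a * Ninv x a l) = if k = l then (1 : ℝ) else 0)
    (Γhat T φ ω : (Fin n → ℝ) → ι → ι → Fin n → ℝ)
    (hT : ∀ x ∈ U, ∀ a b i, T x a b i = ∑ k, Minv x a k *
      (pd (fun y => M y k b) i x + (∑ l, Γ x k i l * M x l b)
        - (∑ c, Γhat x c b i * M x k c)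
        - (1 / 2) * ∑ l, ∑ m, ρ x l b * ginv x k m * H x m l i))
    (hφ : ∀ x ∈ U, ∀ a b i, φ x a b i = ∑ k, Ninv x a k *
      (pd (fun y => ρ y k b) i x + (∑ l, Γ x k i l * ρ x l b)
        - (∑ c, Γhat x c b i * ρ x k c) - ∑ c, ρ x k c * T x c b i))
    (hω : ∀ x ∈ U, ∀ a b i, ω x a b i = Γhat x a b i - φ x a b i + T x a b i) :
    ∀ x ∈ U, ∀ a i j,
      (∑ k, ρ x k a * H x k i j)
        = pd (fun y => θ y a j) i x - pd (fun y => θ y a i) j x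
          - (∑ b, (ω x b a i * θ x b j - ω x b a j * θ x b i))
          - ∑ b, ∑ k, (φ x b a i * ρ x k b * g x k j - φ x b a j * ρ x k b * g x k i) := by
  intro x hx a i j
  have hUx : U ∈ 𝓝 x := hU.mem_nhds hx
  have hgx i j := (hg i j).differentiableAt hUx
  have hginvx i j := (hginv i j).differentiableAt hUx
  have hρx i a := (hρ i a).differentiableAt hUx
  have hθx a i := (hθ a i).differentiableAt hUx
  have lowered i j : ∑ b, ω x b a i * θ x b j + ∑ b, ∑ k, φ x b a i * ρ x k b * g x k j
      = ∑ k, g x j k * covDeriv Γ (sharp ginv fun y => θ y a) i x k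
        - (1 / 2) * ∑ l, ρ x l a * H x j l i := by
    simp only [hω x hx]
    exact sum_connection_mul_add_sum_mul_mul_eq_sub (hsymm x hx) (hinv x hx)
      (hM x hx) (hN x hx) (hMinv x hx) (hNinv x hx)
      (fun k b => covDeriv_add (Γ := Γ) (Filter.eventually_of_mem hUx fun y hy k => hM y hy k b)
        (differentiableAt_sharp hginvx (hθx b)) (hρx · b) i k)
      (hT x hx · · i) (hφ x hx · · i) j a
  have dθ := sum_metric_mul_covDeriv_sharp_sub hgx (Filter.eventually_of_mem hUx hsymm) hginvx
    (Filter.eventually_of_mem hUx hinv) (sum_metric_mul_christoffel (hinv x hx) (hΓ x hx))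
    (hθx a) i j
  have hHji : ∑ l, ρ x l a * H x j l i = ∑ k, ρ x k a * H x k i j :=
    Finset.sum_congr rfl fun l _ => by rw [hH₁ x hx j l i, hH₂ x hx l j i, neg_neg]
  have hHij : ∑ l, ρ x l a * H x i l j = -∑ k, ρ x k a * H x k i j := by
    simp only [hH₁ x hx i, mul_neg, Finset.sum_neg_distrib]
  simp only [Finset.sum_sub_distrib]
  linarith [lowered i j, lowered j i]

/-- **Antisymmetric invariance condition** `ι_{ρ_a} H = dθ_a − ω^b_a ∧ θ_b ± φ^b_a ∧ ι_{ρ_b} g`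
(for one choice of worldsheet-signature sign).
On an open set `U ⊆ ℝⁿ` with a Riemannian metric `g` (inverse `ginv`, Levi-Civita
Christoffel symbols `Γ`), a closed-3-form-type field `H` (totally antisymmetric), data
`ρ^i_a`, `θ_{ai}` with `M = θ* + ρ` and `N = θ* − ρ` pointwise invertible, arbitrary
auxiliary connection coefficients `Γ̂`, and `T`, `φ`, `ω` defined by the general
formulas, the antisymmetric invariance condition holds at every point of `U`. -/
theorem antisymmetric_invariance_condition {n : ℕ}
    (U : Set (Fin n → ℝ)) (hU : IsOpen U)
    (g ginv : (Fin n → ℝ) → Fin n → Fin n → ℝ)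
    (hg_smooth : ∀ i j, ContDiffOn ℝ (⊤ : ℕ∞) (fun x => g x i j) U)
    (hginv_smooth : ∀ i j, ContDiffOn ℝ (⊤ : ℕ∞) (fun x => ginv x i j) U)
    (hg_symm : ∀ x ∈ U, ∀ i j, g x i j = g x j i)
    (hg_posdef : ∀ x ∈ U, ∀ v : Fin n → ℝ, v ≠ 0 → 0 < ∑ i, ∑ j, v i * g x i j * v j)
    (hginv : ∀ x ∈ U, ∀ i j, (∑ k, g x i k * ginv x k j) = if i = j then (1 : ℝ) else 0)
    (Γ : (Fin n → ℝ) → Fin n → Fin n → Fin n → ℝ)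
    (hΓ : ∀ x ∈ U, ∀ i j k, Γ x i j k =
      (1 / 2) * ∑ l, ginv x i l *
        (pd (fun y => g y l k) j x + pd (fun y => g y l j) k x - pd (fun y => g y j k) l x))
    (H : (Fin n → ℝ) → Fin n → Fin n → Fin n → ℝ)
    (hH_smooth : ∀ i j k, ContDiffOn ℝ (⊤ : ℕ∞) (fun x => H x i j k) U)
    (hH_anti₁ : ∀ x ∈ U, ∀ i j k, H x i j k = - H x j i k)
    (hH_anti₂ : ∀ x ∈ U, ∀ i j k, H x i j k = - H x i k j)
    (ρ θ : (Fin n → ℝ) → Fin n → Fin n → ℝ)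
    (hρ_smooth : ∀ i a, ContDiffOn ℝ (⊤ : ℕ∞) (fun x => ρ x i a) U)
    (hθ_smooth : ∀ a i, ContDiffOn ℝ (⊤ : ℕ∞) (fun x => θ x a i) U)
    (M N : (Fin n → ℝ) → Fin n → Fin n → ℝ)
    (hM : ∀ (x : Fin n → ℝ) (k b : Fin n), M x k b = (∑ l, ginv x k l * θ x b l) + ρ x k b)
    (hN : ∀ (x : Fin n → ℝ) (k b : Fin n), N x k b = (∑ l, ginv x k l * θ x b l) - ρ x k b)
    (Minv Ninv : (Fin n → ℝ) → Fin n → Fin n → ℝ)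
    (hMinv₁ : ∀ x ∈ U, ∀ a b, (∑ k, Minv x a k * M x k b) = if a = b then (1 : ℝ) else 0)
    (hMinv₂ : ∀ x ∈ U, ∀ a b, (∑ k, M x a k * Minv x k b) = if a = b then (1 : ℝ) else 0)
    (hNinv₁ : ∀ x ∈ U, ∀ a b, (∑ k, Ninv x a k * N x k b) = if a = b then (1 : ℝ) else 0)
    (hNinv₂ : ∀ x ∈ U, ∀ a b, (∑ k, N x a k * Ninv x k b) = if a = b then (1 : ℝ) else 0)
    (Γhat : (Fin n → ℝ) → Fin n → Fin n → Fin n → ℝ)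
    (hΓhat_smooth : ∀ a b i, ContDiffOn ℝ (⊤ : ℕ∞) (fun x => Γhat x a b i) U)
    (T φ ω : (Fin n → ℝ) → Fin n → Fin n → Fin n → ℝ)
    (hT : ∀ x ∈ U, ∀ a b i, T x a b i = ∑ k, Minv x a k *
      (pd (fun y => M y k b) i x + (∑ l, Γ x k i l * M x l b)
        - (∑ c, Γhat x c b i * M x k c)
        - (1 / 2) * ∑ l, ∑ m, ρ x l b * ginv x k m * H x m l i))
    (hφ : ∀ x ∈ U, ∀ a b i, φ x a b i = ∑ k, Ninv x a k *
      (pd (fun y => ρ y k b) i x + (∑ l, Γ x k i l * ρ x l b)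
        - (∑ c, Γhat x c b i * ρ x k c) - ∑ c, ρ x k c * T x c b i))
    (hω : ∀ x ∈ U, ∀ a b i, ω x a b i = Γhat x a b i - φ x a b i + T x a b i) :
    ∀ x ∈ U, ∀ a i j,
      (∑ k, ρ x k a * H x k i j)
        = pd (fun y => θ y a j) i x - pd (fun y => θ y a i) j x
          - (∑ b, (ω x b a i * θ x b j - ω x b a j * θ x b i))
          - ∑ b, ∑ k, (φ x b a i * ρ x k b * g x k j - φ x b a j * ρ x k b * g x k i) := by
  exact antisymmetric_invariance_condition_general U hU g ginv
    (fun i j => (hg_smooth i j).differentiableOn (by simp))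
    (fun i j => (hginv_smooth i j).differentiableOn (by simp))
    hg_symm hginv Γ hΓ H hH_anti₁ hH_anti₂ ρ θ
    (fun i a => (hρ_smooth i a).differentiableOn (by simp))
    (fun a i => (hθ_smooth a i).differentiableOn (by simp)) M N (fun x _ => hM x) (fun x _ => hN x)
    Minv Ninv hMinv₂ hNinv₂ Γhat T φ ω hT hφ hω
end

section
/- The coefficient functions ω^a_{bi} and φ^a_{bi} are independent of the choice of the auxiliary connection coefficients Γ̂^a_{bi}: writing T₀, φ₀, ω₀ for the quantities T, φ, ω computed with Γ̂ ≡ 0, one has, for every choice of smooth Γ̂, that T^a_{bi} = T₀^a_{bi} − Γ̂^a_{bi}, φ^a_{bi} = φ₀^a_{bi}, and ω^a_{bi} = ω₀^a_{bi} = T₀^a_{bi} − φ₀^a_{bi} at every point of U. -/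
section LeftInverse

variable {R α κ : Type*} [CommRing R] [Fintype α] [DecidableEq α] [Fintype κ]
  {L : α → κ → R} {M : κ → α → R}

theorem sum_mul_sum_mul_of_left_inverse
    (hL : ∀ a c, ∑ k, L a k * M k c = if a = c then 1 else 0) (γ : α → R) (a : α) :
    ∑ k, L a k * ∑ c, γ c * M k c = γ a :=
  calc ∑ k, L a k * ∑ c, γ c * M k c
      = ∑ k, ∑ c, γ c * (L a k * M k c) := by simp only [Finset.mul_sum, mul_left_comm]
    _ = ∑ c, γ c * ∑ k, L a k * M k c := by rw [Finset.sum_comm]; simp only [Finset.mul_sum]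
    _ = γ a := by simp only [hL, mul_ite, mul_one, mul_zero, Finset.sum_ite_eq,
        Finset.mem_univ, if_true]

theorem sum_mul_sub_sum_mul_of_left_inverse
    (hL : ∀ a c, ∑ k, L a k * M k c = if a = c then 1 else 0) (p : κ → R) (γ : α → R) (a : α) :
    ∑ k, L a k * (p k - ∑ c, γ c * M k c) = ∑ k, L a k * p k - γ a := by
  simp only [mul_sub, Finset.sum_sub_distrib, sum_mul_sum_mul_of_left_inverse hL]

end LeftInverse

theorem sub_sum_mul_sub_sum_mul_sub {R α : Type*} [CommRing R] [Fintype α]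
    (q : R) (r γ t : α → R) :
    q - ∑ c, γ c * r c - ∑ c, r c * (t c - γ c) = q - ∑ c, r c * t c := by
  simp only [mul_sub, Finset.sum_sub_distrib, mul_comm (γ _)]
  ring

/-- The lower indices `b` and `i` are fixed: `γ` stands for the vector `Γ̂^·_{bi}`, `L` for `M⁻¹`,
`K` for `N⁻¹`, `p` for the `Γ̂`-free part of the bracket in `T`, and `q` for the components
`∂_i ρ^k_b + Γ^k_{il} ρ^l_b` in `φ`. -/
theorem coefficients_independent_of_auxiliary_connection_general {R α κ κ' : Type*} [CommRing R]
    [Fintype α] [DecidableEq α] [Fintype κ] [Fintype κ']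
    {L : α → κ → R} {M : κ → α → R} {K : α → κ' → R} {ρ : κ' → α → R}
    {p : κ → R} {q : κ' → R} {γ T φ ω T₀ φ₀ ω₀ : α → R}
    (hL : ∀ a c, ∑ k, L a k * M k c = if a = c then 1 else 0)
    (hT : ∀ a, T a = ∑ k, L a k * (p k - ∑ c, γ c * M k c))
    (hφ : ∀ a, φ a = ∑ k, K a k * (q k - ∑ c, γ c * ρ k c - ∑ c, ρ k c * T c))
    (hω : ∀ a, ω a = γ a - φ a + T a)
    (hT₀ : ∀ a, T₀ a = ∑ k, L a k * p k)
    (hφ₀ : ∀ a, φ₀ a = ∑ k, K a k * (q k - ∑ c, ρ k c * T₀ c))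
    (hω₀ : ∀ a, ω₀ a = -φ₀ a + T₀ a) (a : α) :
    T a = T₀ a - γ a ∧ φ a = φ₀ a ∧ ω a = ω₀ a ∧ ω₀ a = T₀ a - φ₀ a := by
  have T_eq (c : α) : T c = T₀ c - γ c := by
    rw [hT, hT₀, sum_mul_sub_sum_mul_of_left_inverse hL]
  have φ_eq : φ a = φ₀ a := by
    simp only [hφ, hφ₀, T_eq, sub_sum_mul_sub_sum_mul_sub]
  have ω₀_eq : ω₀ a = T₀ a - φ₀ a := by rw [hω₀, neg_add_eq_sub]
  have ω_eq : ω a = ω₀ a := by rw [hω, ω₀_eq, T_eq, φ_eq]; ring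
  exact ⟨T_eq a, φ_eq, ω_eq, ω₀_eq⟩

/-- The coefficient functions `ω^a_{bi}` and `φ^a_{bi}` are independent of the choice of
the auxiliary connection coefficients `Γ̂^a_{bi}`: writing `T₀, φ₀, ω₀` for the quantities
computed with `Γ̂ ≡ 0`, one has `T = T₀ − Γ̂`, `φ = φ₀` and `ω = ω₀ = T₀ − φ₀` on `U`.
On an open set `U ⊆ ℝⁿ` with a Riemannian metric `g` (inverse `ginv`, Levi-Civita
Christoffel symbols `Γ`), a closed-3-form-type field `H` (totally antisymmetric), data
`ρ^i_a`, `θ_{ai}` with `M = θ* + ρ` and `N = θ* − ρ` pointwise invertible, arbitrary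
auxiliary connection coefficients `Γ̂`, and `T`, `φ`, `ω` defined by the general
formulas. -/
theorem coefficients_independent_of_auxiliary_connection {n : ℕ}
    (U : Set (Fin n → ℝ)) (hU : IsOpen U)
    (g ginv : (Fin n → ℝ) → Fin n → Fin n → ℝ)
    (hg_smooth : ∀ i j, ContDiffOn ℝ (⊤ : ℕ∞) (fun x => g x i j) U)
    (hginv_smooth : ∀ i j, ContDiffOn ℝ (⊤ : ℕ∞) (fun x => ginv x i j) U)
    (hg_symm : ∀ x ∈ U, ∀ i j, g x i j = g x j i)
    (hg_posdef : ∀ x ∈ U, ∀ v : Fin n → ℝ, v ≠ 0 → 0 < ∑ i, ∑ j, v i * g x i j * v j)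
    (hginv : ∀ x ∈ U, ∀ i j, (∑ k, g x i k * ginv x k j) = if i = j then (1 : ℝ) else 0)
    (Γ : (Fin n → ℝ) → Fin n → Fin n → Fin n → ℝ)
    (hΓ : ∀ x ∈ U, ∀ i j k, Γ x i j k =
      (1 / 2) * ∑ l, ginv x i l *
        (pd (fun y => g y l k) j x + pd (fun y => g y l j) k x - pd (fun y => g y j k) l x))
    (H : (Fin n → ℝ) → Fin n → Fin n → Fin n → ℝ)
    (hH_smooth : ∀ i j k, ContDiffOn ℝ (⊤ : ℕ∞) (fun x => H x i j k) U)
    (hH_anti₁ : ∀ x ∈ U, ∀ i j k, H x i j k = - H x j i k)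
    (hH_anti₂ : ∀ x ∈ U, ∀ i j k, H x i j k = - H x i k j)
    (ρ θ : (Fin n → ℝ) → Fin n → Fin n → ℝ)
    (hρ_smooth : ∀ i a, ContDiffOn ℝ (⊤ : ℕ∞) (fun x => ρ x i a) U)
    (hθ_smooth : ∀ a i, ContDiffOn ℝ (⊤ : ℕ∞) (fun x => θ x a i) U)
    (M N : (Fin n → ℝ) → Fin n → Fin n → ℝ)
    (hM : ∀ (x : Fin n → ℝ) (k b : Fin n), M x k b = (∑ l, ginv x k l * θ x b l) + ρ x k b)
    (hN : ∀ (x : Fin n → ℝ) (k b : Fin n), N x k b = (∑ l, ginv x k l * θ x b l) - ρ x k b)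
    (Minv Ninv : (Fin n → ℝ) → Fin n → Fin n → ℝ)
    (hMinv₁ : ∀ x ∈ U, ∀ a b, (∑ k, Minv x a k * M x k b) = if a = b then (1 : ℝ) else 0)
    (hMinv₂ : ∀ x ∈ U, ∀ a b, (∑ k, M x a k * Minv x k b) = if a = b then (1 : ℝ) else 0)
    (hNinv₁ : ∀ x ∈ U, ∀ a b, (∑ k, Ninv x a k * N x k b) = if a = b then (1 : ℝ) else 0)
    (hNinv₂ : ∀ x ∈ U, ∀ a b, (∑ k, N x a k * Ninv x k b) = if a = b then (1 : ℝ) else 0)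
    (Γhat : (Fin n → ℝ) → Fin n → Fin n → Fin n → ℝ)
    (hΓhat_smooth : ∀ a b i, ContDiffOn ℝ (⊤ : ℕ∞) (fun x => Γhat x a b i) U)
    (T φ ω : (Fin n → ℝ) → Fin n → Fin n → Fin n → ℝ)
    (hT : ∀ x ∈ U, ∀ a b i, T x a b i = ∑ k, Minv x a k *
      (pd (fun y => M y k b) i x + (∑ l, Γ x k i l * M x l b)
        - (∑ c, Γhat x c b i * M x k c)
        - (1 / 2) * ∑ l, ∑ m, ρ x l b * ginv x k m * H x m l i))
    (hφ : ∀ x ∈ U, ∀ a b i, φ x a b i = ∑ k, Ninv x a k *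
      (pd (fun y => ρ y k b) i x + (∑ l, Γ x k i l * ρ x l b)
        - (∑ c, Γhat x c b i * ρ x k c) - ∑ c, ρ x k c * T x c b i))
    (hω : ∀ x ∈ U, ∀ a b i, ω x a b i = Γhat x a b i - φ x a b i + T x a b i)
    (T₀ φ₀ ω₀ : (Fin n → ℝ) → Fin n → Fin n → Fin n → ℝ)
    (hT₀ : ∀ x ∈ U, ∀ a b i, T₀ x a b i = ∑ k, Minv x a k *
      (pd (fun y => M y k b) i x + (∑ l, Γ x k i l * M x l b)
        - (1 / 2) * ∑ l, ∑ m, ρ x l b * ginv x k m * H x m l i))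
    (hφ₀ : ∀ x ∈ U, ∀ a b i, φ₀ x a b i = ∑ k, Ninv x a k *
      (pd (fun y => ρ y k b) i x + (∑ l, Γ x k i l * ρ x l b)
        - ∑ c, ρ x k c * T₀ x c b i))
    (hω₀ : ∀ x ∈ U, ∀ a b i, ω₀ x a b i = - φ₀ x a b i + T₀ x a b i) :
    ∀ x ∈ U, ∀ a b i,
      T x a b i = T₀ x a b i - Γhat x a b i
        ∧ φ x a b i = φ₀ x a b i
        ∧ ω x a b i = ω₀ x a b i
        ∧ ω₀ x a b i = T₀ x a b i - φ₀ x a b i := by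
  intro x hx a b i
  exact coefficients_independent_of_auxiliary_connection_general (hMinv₁ x hx)
    (fun a => by simp only [hT x hx, sub_right_comm]) (hφ x hx · b i) (hω x hx · b i)
    (hT₀ x hx · b i) (hφ₀ x hx · b i) (hω₀ x hx · b i) a
end

section
/- At each point of U the following are equivalent: (i) the H-twisted Jacobi identity holds, i.e. for all i, j, k, the cyclic sum over (i,j,k) of Σ_l π^{il} ∂_l π^{jk} equals Σ_{i',j',k'} H_{i'j'k'} π^{i'i} π^{j'j} π^{k'k}; (ii) for all i, j, the Lie bracket of vector fields [π♯dx^i, π♯dx^j] equals Σ_k C^{ij}_k · π♯dx^k, where C^{ij}_k := ∂_k π^{ij} + Σ_{m,n} H_{kmn} π^{mi} π^{nj}. (This expresses that the twisted Jacobi identity is exactly the integrability/anchor condition for the Dirac structure given by the graph of π in the H-twisted Courant algebroid.) -/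
theorem cyclic_of_antisymm {ι R : Type*} [InvolutiveNeg R] {h : ι → ι → ι → R}
    (h₁ : ∀ i j k, h i j k = -h j i k) (h₂ : ∀ i j k, h i j k = -h i k j) (i j k : ι) :
    h i j k = h k i j := by
  rw [h₂ i j k, h₁ i k j, neg_neg]

section Jet

variable {ι R : Type*} [Fintype ι]

/-- The Jacobiator `Σ_l π^{il} ∂_l π^{jk} + cycl(i,j,k)` of a bivector, as a function of its first
jet at a point: `P i j` stands for `π^{ij}` and `D l i j` for `∂_l π^{ij}`. -/
def jacobiator [NonUnitalNonAssocSemiring R] (P : ι → ι → R) (D : ι → ι → ι → R) (i j k : ι) : R :=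
  (∑ l, P i l * D l j k) + (∑ l, P j l * D l k i) + ∑ l, P k l * D l i j

/-- The coefficient of `∂_k` in the Lie bracket `[π♯dx^i, π♯dx^j]`, as a function of the first jet
of `π` at a point: `P i j` stands for `π^{ij}` and `D l i j` for `∂_l π^{ij}`. -/
def sharpBracket [NonUnitalNonAssocRing R] (P : ι → ι → R) (D : ι → ι → ι → R) (i j k : ι) : R :=
  (∑ m, P i m * D m j k) - ∑ m, P j m * D m i k

/-- The value `h(a, b, c)` of the covariant 3-tensor with components `h i j k`; the twist of the
Jacobi identity is its value on columns of `π`. -/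
def tensorEval [NonUnitalNonAssocSemiring R] (h : ι → ι → ι → R) (a b c : ι → R) : R :=
  ∑ i, ∑ j, ∑ k, h i j k * a i * b j * c k

/-- The structure functions `C^{ij}_k = ∂_k π^{ij} + Σ_{m,n} H_{kmn} π^{mi} π^{nj}` of the graph of
`π` in the twisted Courant algebroid, with `P i j` for `π^{ij}`, `D l i j` for `∂_l π^{ij}` and `h`
for the value of `H` at the point. -/
def twistedStructureCoeff [NonUnitalNonAssocSemiring R] (P : ι → ι → R) (D h : ι → ι → ι → R)
    (i j k : ι) : R :=
  D k i j + ∑ m, ∑ n, h k m n * P m i * P n j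

theorem jacobiator_eq_sharpBracket_sub [NonUnitalCommRing R] {P : ι → ι → R}
    {D : ι → ι → ι → R} (hP : ∀ i j, P i j = -P j i) (hD : ∀ l i j, D l i j = -D l j i)
    (i j k : ι) :
    jacobiator P D i j k = sharpBracket P D i j k - ∑ l, D l i j * P l k := by
  have second_term : ∑ l, P j l * D l k i = -∑ l, P j l * D l i k := by
    simp only [hD _ k i, mul_neg, Finset.sum_neg_distrib]
  have third_term : ∑ l, P k l * D l i j = -∑ l, D l i j * P l k := by
    simp only [hP k, neg_mul, mul_comm (P _ k), Finset.sum_neg_distrib]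
  rw [jacobiator, sharpBracket, second_term, third_term, ← sub_eq_add_neg, ← sub_eq_add_neg]

theorem tensorEval_eq_sum_contraction [NonUnitalSemiring R] {h : ι → ι → ι → R}
    (hcyc : ∀ i j k, h i j k = h k i j) (a b c : ι → R) :
    tensorEval h a b c = ∑ k, (∑ i, ∑ j, h k i j * a i * b j) * c k :=
  calc tensorEval h a b c
      = ∑ i, ∑ k, ∑ j, h i j k * a i * b j * c k :=
        Finset.sum_congr rfl fun _ _ => Finset.sum_comm
    _ = ∑ k, ∑ i, ∑ j, h i j k * a i * b j * c k := Finset.sum_comm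
    _ = ∑ k, (∑ i, ∑ j, h k i j * a i * b j) * c k := by
        simp only [Finset.sum_mul]
        exact Finset.sum_congr rfl fun k _ => Finset.sum_congr rfl fun i _ =>
          Finset.sum_congr rfl fun j _ => by rw [hcyc i j k]

theorem sum_twistedStructureCoeff_mul [NonUnitalSemiring R] (P : ι → ι → R)
    (D : ι → ι → ι → R) {h : ι → ι → ι → R} (hcyc : ∀ i j k, h i j k = h k i j) (i j k : ι) :
    ∑ l, twistedStructureCoeff P D h i j l * P l k
      = (∑ l, D l i j * P l k) + tensorEval h (P · i) (P · j) (P · k) := by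
  simp only [twistedStructureCoeff, add_mul, Finset.sum_add_distrib,
    tensorEval_eq_sum_contraction hcyc]

theorem jacobiator_eq_tensorEval_iff [NonUnitalCommRing R] {P : ι → ι → R}
    {D h : ι → ι → ι → R} (hP : ∀ i j, P i j = -P j i) (hD : ∀ l i j, D l i j = -D l j i)
    (hcyc : ∀ i j k, h i j k = h k i j) (i j k : ι) :
    jacobiator P D i j k = tensorEval h (P · i) (P · j) (P · k) ↔
      sharpBracket P D i j k = ∑ l, twistedStructureCoeff P D h i j l * P l k := by
  rw [jacobiator_eq_sharpBracket_sub hP hD, sum_twistedStructureCoeff_mul P D hcyc,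
    sub_eq_iff_eq_add']

end Jet

theorem hasFDerivAt_antisymm {ι 𝕜 E F : Type*} [NontriviallyNormedField 𝕜]
    [NormedAddCommGroup E] [NormedSpace 𝕜 E] [NormedAddCommGroup F] [NormedSpace 𝕜 F]
    {π : E → ι → ι → F} {π' : ι → ι → E →L[𝕜] F} {x : E}
    (hπ' : ∀ i j, HasFDerivAt (fun y => π y i j) (π' i j) x)
    (hπ : ∀ᶠ y in nhds x, ∀ i j, π y i j = -π y j i) (i j : ι) :
    π' i j = -π' j i :=
  (hπ' i j).unique ((hπ' j i).fun_neg.congr_of_eventuallyEq (hπ.mono fun _ hy => hy i j))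

theorem twisted_jacobi_iff_bracket_closure_general {ι 𝕜 : Type*} [Fintype ι] [DecidableEq ι]
    [NontriviallyNormedField 𝕜] {π : (ι → 𝕜) → ι → ι → 𝕜} {π' : ι → ι → (ι → 𝕜) →L[𝕜] 𝕜}
    {x : ι → 𝕜} (hπ' : ∀ i j, HasFDerivAt (fun y => π y i j) (π' i j) x)
    (hπ : ∀ᶠ y in nhds x, ∀ i j, π y i j = -π y j i)
    {h : ι → ι → ι → 𝕜} (hcyc : ∀ i j k, h i j k = h k i j) (i j k : ι) :
    let D : ι → ι → ι → 𝕜 := fun l i j => π' i j (Pi.single l 1)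
    jacobiator (π x) D i j k = tensorEval h (π x · i) (π x · j) (π x · k) ↔
      sharpBracket (π x) D i j k = ∑ l, twistedStructureCoeff (π x) D h i j l * π x l k :=
  jacobiator_eq_tensorEval_iff hπ.self_of_nhds
    (fun l i j => DFunLike.congr_fun (hasFDerivAt_antisymm hπ' hπ i j) (Pi.single l 1))
    hcyc i j k

/-- **Twisted Jacobi identity ⇔ anchor condition for the graph of `π`.**
For a smooth antisymmetric bivector `π` and a smooth totally antisymmetric `H` on an open
set `U ⊆ ℝⁿ`, at each point of `U` the following are equivalent:
(i) the `H`-twisted Jacobi identity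
`Σ_l π^{il} ∂_l π^{jk} + cycl(i,j,k) = Σ H_{i'j'k'} π^{i'i} π^{j'j} π^{k'k}`;
(ii) the Lie brackets `[π♯dx^i, π♯dx^j]` equal `Σ_k C^{ij}_k π♯dx^k` with
`C^{ij}_k = ∂_k π^{ij} + Σ_{m,l} H_{kml} π^{mi} π^{lj}`, where
`π♯dx^i = Σ_m π^{im} ∂_m` and `[X,Y]^l = Σ_m (X^m ∂_m Y^l − Y^m ∂_m X^l)`. -/
theorem twisted_jacobi_iff_bracket_closure {n : ℕ}
    (U : Set (Fin n → ℝ)) (hU : IsOpen U)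
    (π : (Fin n → ℝ) → Fin n → Fin n → ℝ)
    (hπ_smooth : ∀ i j, ContDiffOn ℝ (⊤ : ℕ∞) (fun x => π x i j) U)
    (hπ_anti : ∀ x ∈ U, ∀ i j, π x i j = - π x j i)
    (H : (Fin n → ℝ) → Fin n → Fin n → Fin n → ℝ)
    (hH_smooth : ∀ i j k, ContDiffOn ℝ (⊤ : ℕ∞) (fun x => H x i j k) U)
    (hH_anti₁ : ∀ x ∈ U, ∀ i j k, H x i j k = - H x j i k)
    (hH_anti₂ : ∀ x ∈ U, ∀ i j k, H x i j k = - H x i k j) :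
    ∀ x ∈ U,
      ((∀ i j k : Fin n,
          (∑ l, π x i l * pd (fun y => π y j k) l x)
            + (∑ l, π x j l * pd (fun y => π y k i) l x)
            + (∑ l, π x k l * pd (fun y => π y i j) l x)
          = ∑ i', ∑ j', ∑ k', H x i' j' k' * π x i' i * π x j' j * π x k' k)
        ↔ (∀ i j l : Fin n,
          (∑ m, π x i m * pd (fun y => π y j l) m x)
            - (∑ m, π x j m * pd (fun y => π y i l) m x)
          = ∑ k, (pd (fun y => π y i j) k x
              + ∑ m, ∑ l', H x k m l' * π x m i * π x l' j) * π x k l)) := by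
  intro x hx
  have hπ' (i j : Fin n) : DifferentiableAt ℝ (fun y => π y i j) x :=
    ((hπ_smooth i j).contDiffAt (hU.mem_nhds hx)).differentiableAt (by simp)
  exact forall₃_congr <| twisted_jacobi_iff_bracket_closure_general
    (fun i j => (hπ' i j).hasFDerivAt) (Filter.eventually_of_mem (hU.mem_nhds hx) hπ_anti)
    (cyclic_of_antisymm (hH_anti₁ x hx) (hH_anti₂ x hx))
end
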